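/- Let 0 < α < 1, let ν, ħ ∈ ℝ with ħ ≠ 0, let a < b be reals and let ψ : [a,b] → ℝ be continuously differentiable, strictly increasing with ψ' > 0. Define the HAM iterates for the initial guess u_0(r,t) = r by u_m(r,t) = (χ_m + ħ)·u_{m−1}(r,t) − (χ_m + ħ)·u_{m−1}(r,a) − ħν · I^{α,ψ}_a[ ∂²u_{m−1}/∂r²(r,·) + (1/r)∂u_{m−1}/∂r(r,·) ](t) for m ≥ 1, where χ_1 = 0 and χ_m = 1 for m ≥ 2. Then for every r ≠ 0 and t ∈ [a,b]: u_1(r,t) = −(ħν/r) · (ψ(t) − ψ(a))^α / Γ(α+1), and u_2(r,t) = −(1+ħ)·(ħν/r)·(ψ(t) − ψ(a))^α / Γ(α+1) + (ħ²ν²/r³)·(ψ(t) − ψ(a))^{2α} / Γ(2α+1). -/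

import Mathlib

/-!
The substitution `u = ψ τ - ψ a` turns the ψ-fractional integral of `(ψ τ - ψ a) ^ β` into a
Beta integral, which gives the power rule
`I^{α,ψ}_a (ψ - ψ a) ^ β = Γ(β + 1) / Γ(α + β + 1) * (ψ - ψ a) ^ (α + β)` (`psiFracInt_rpow`).
In the radial variable, `∂²/∂r² + (1/r) ∂/∂r` sends `r` to `r⁻¹` and `r⁻¹` to `r⁻³`. The first
iterate is therefore the power rule with `β = 0`, and the second is the power rule with `β = α`,
the term `u₁(r, a)` being zero.
-/

open Real MeasureTheory intervalIntegral

/-- The ψ-fractional integral of order `α` with base point `a` of a function `f`. -/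
noncomputable def psiFracInt (α a : ℝ) (ψ f : ℝ → ℝ) (t : ℝ) : ℝ :=
  (1 / Real.Gamma α) * ∫ τ in a..t, deriv ψ τ * (ψ t - ψ τ) ^ (α - 1) * f τ

/-- The indicator `χ_m`: `χ_m = 0` for `m ≤ 1` and `χ_m = 1` for `m > 1`. -/
noncomputable def chiHAM (m : ℕ) : ℝ := if m ≤ 1 then 0 else 1

/-- The HAM iteration for the time-fractional Navier–Stokes equation in cylindrical
coordinates with initial guess `u₀(r,t) = r`. -/
noncomputable def hamNS (α a ν ℏ : ℝ) (ψ : ℝ → ℝ) : ℕ → ℝ → ℝ → ℝ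
  | 0 => fun r _ => r
  | m + 1 => fun r t =>
      (chiHAM (m + 1) + ℏ) * hamNS α a ν ℏ ψ m r t
      - (chiHAM (m + 1) + ℏ) * hamNS α a ν ℏ ψ m r a
      - ℏ * ν * psiFracInt α a ψ (fun τ =>
          deriv (deriv (fun r' => hamNS α a ν ℏ ψ m r' τ)) r
            + (1 / r) * deriv (fun r' => hamNS α a ν ℏ ψ m r' τ) r) t

/-- The Beta integral over `[0, x]`, for real exponents. -/
lemma integral_beta_scaled {α β x : ℝ} (hα : 0 < α) (hβ : 0 ≤ β) (hx : 0 < x) :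
    ∫ u in (0 : ℝ)..x, (x - u) ^ (α - 1) * u ^ β =
      x ^ (α + β) * (Real.Gamma (β + 1) * Real.Gamma α / Real.Gamma (α + β + 1)) := by
  have h := Complex.betaIntegral_scaled ((β + 1 : ℝ) : ℂ) (α : ℂ) hx
  have hB := Complex.betaIntegral_eq_Gamma_mul_div ((β + 1 : ℝ) : ℂ) (α : ℂ)
    (by rw [Complex.ofReal_re]; linarith) (by simpa using hα)
  rw [hB, ← Complex.ofReal_add, Complex.Gamma_ofReal, Complex.Gamma_ofReal,
    Complex.Gamma_ofReal] at h
  have hexp : ((β + 1 + α : ℝ) : ℂ) - 1 = ((α + β : ℝ) : ℂ) := by push_cast; ring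
  rw [hexp, ← Complex.ofReal_cpow hx.le] at h
  have hint : (∫ u in (0 : ℝ)..x,
        (u : ℂ) ^ (((β + 1 : ℝ) : ℂ) - 1) * ((x : ℂ) - u) ^ ((α : ℂ) - 1)) =
      ∫ u in (0 : ℝ)..x, (((x - u) ^ (α - 1) * u ^ β : ℝ) : ℂ) := by
    refine intervalIntegral.integral_congr fun u hu => ?_
    rw [Set.uIcc_of_le hx.le] at hu
    have e : ((β + 1 : ℝ) : ℂ) - 1 = (β : ℂ) := by push_cast; ring
    rw [e, Complex.ofReal_mul, Complex.ofReal_cpow hu.1, Complex.ofReal_cpow (sub_nonneg.2 hu.2)]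
    push_cast
    ring
  rw [hint, intervalIntegral.integral_ofReal] at h
  have e2 : α + β + 1 = β + 1 + α := by ring
  rw [e2]
  exact_mod_cast h

/-- The power rule for the ψ-fractional integral. -/
lemma psiFracInt_rpow {α β a b c t : ℝ} {ψ : ℝ → ℝ} (hα : 0 < α) (hβ : 0 ≤ β)
    (hψC : ContinuousOn ψ (Set.Icc a b)) (hψmono : StrictMonoOn ψ (Set.Icc a b))
    (hψ' : ∀ x ∈ Set.Icc a b, 0 < deriv ψ x) (ht : t ∈ Set.Icc a b) :
    psiFracInt α a ψ (fun τ => c * (ψ τ - ψ a) ^ β) t =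
      c * (Real.Gamma (β + 1) / Real.Gamma (α + β + 1)) * (ψ t - ψ a) ^ (α + β) := by
  unfold psiFracInt
  rcases ht.1.eq_or_lt with rfl | hat
  · rw [intervalIntegral.integral_same, sub_self, Real.zero_rpow (by linarith)]
    ring
  have hsub : Set.Icc a t ⊆ Set.Icc a b := Set.Icc_subset_Icc_right ht.2
  have hpos : 0 < ψ t - ψ a := sub_pos.2 (hψmono ⟨le_rfl, hat.le.trans ht.2⟩ ht hat)
  have key := intervalIntegral.integral_comp_mul_deriv_of_deriv_nonneg (a := a) (b := t)
    (f := fun τ => ψ τ - ψ a) (f' := deriv ψ)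
    (g := fun u => (ψ t - ψ a - u) ^ (α - 1) * u ^ β)
    (by
      rw [Set.uIcc_of_le hat.le]
      exact (hψC.mono hsub).sub continuousOn_const)
    (fun x hx => by
      rw [min_eq_left hat.le, max_eq_right hat.le] at hx
      -- `deriv ψ x ≠ 0` rules out the junk value of `deriv`.
      exact (differentiableAt_of_deriv_ne_zero
        (hψ' x (hsub ⟨hx.1.le, hx.2.le⟩)).ne').hasDerivAt.sub_const _)
    (fun x hx => by
      rw [min_eq_left hat.le, max_eq_right hat.le] at hx
      exact (hψ' x (hsub ⟨hx.1.le, hx.2.le⟩)).le)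
  rw [sub_self, integral_beta_scaled hα hβ hpos] at key
  have hint : (∫ τ in a..t, deriv ψ τ * (ψ t - ψ τ) ^ (α - 1) * (c * (ψ τ - ψ a) ^ β)) =
      c * ∫ τ in a..t, ((fun u => (ψ t - ψ a - u) ^ (α - 1) * u ^ β) ∘
        (fun τ => ψ τ - ψ a)) τ * deriv ψ τ := by
    rw [← intervalIntegral.integral_const_mul]
    refine intervalIntegral.integral_congr fun τ _ => ?_
    simp only [Function.comp, sub_sub_sub_cancel_right]
    ring
  rw [hint, key]
  have := (Real.Gamma_pos_of_pos hα).ne'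
  field_simp

lemma psiFracInt_congr {α a t : ℝ} {ψ f g : ℝ → ℝ} (hat : a ≤ t)
    (h : ∀ τ ∈ Set.Icc a t, f τ = g τ) : psiFracInt α a ψ f t = psiFracInt α a ψ g t := by
  unfold psiFracInt
  congr 1
  refine intervalIntegral.integral_congr fun τ hτ => ?_
  rw [Set.uIcc_of_le hat] at hτ
  simp only [h τ hτ]

/-- The radial operator `∂²/∂r² + (1/r) ∂/∂r` sends `K r⁻¹` to `K r⁻³`; the junk values at
`r = 0` are compatible with this. -/
lemma radial_inv (K r : ℝ) :
    deriv (deriv (fun r' : ℝ => K * r'⁻¹)) r + (1 / r) * deriv (fun r' : ℝ => K * r'⁻¹) r =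
      K * (r ^ 3)⁻¹ := by
  have h1 : deriv (fun r' : ℝ => K * r'⁻¹) = fun r' => -K * (r' ^ 2)⁻¹ := by
    funext x
    rw [deriv_const_mul_field, deriv_inv]
    ring
  rw [h1]
  rcases eq_or_ne r 0 with rfl | hr
  · -- At `0` the function `(r ^ 2)⁻¹` is even, so its `deriv` vanishes.
    have h0 : deriv (fun x : ℝ => (x ^ 2)⁻¹) 0 = 0 := by
      have := deriv_comp_neg (f := fun x : ℝ => (x ^ 2)⁻¹) (0 : ℝ)
      simp only [even_two.neg_pow, neg_zero] at this
      linarith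
    rw [deriv_const_mul_field, h0]
    simp
  · have h2 : HasDerivAt (fun x : ℝ => -K * (x ^ 2)⁻¹) (2 * K * (r ^ 3)⁻¹) r := by
      have := (((hasDerivAt_pow 2 r).inv (pow_ne_zero 2 hr))).const_mul (-K)
      convert! this using 1
      field_simp
      push_cast
      ring
    rw [h2.deriv]
    field_simp
    ring

/-- The first iterate, valid for every `r` since both sides vanish at `r = 0`. -/
lemma hamNS_one {α ν ℏ a b : ℝ} {ψ : ℝ → ℝ} (hα : 0 < α)
    (hψC : ContinuousOn ψ (Set.Icc a b)) (hψmono : StrictMonoOn ψ (Set.Icc a b))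
    (hψ' : ∀ x ∈ Set.Icc a b, 0 < deriv ψ x) (r : ℝ) {t : ℝ} (ht : t ∈ Set.Icc a b) :
    hamNS α a ν ℏ ψ 1 r t = (-(ℏ * ν) * (ψ t - ψ a) ^ α / Real.Gamma (α + 1)) * r⁻¹ := by
  have h := psiFracInt_rpow (c := r⁻¹) hα le_rfl hψC hψmono hψ' ht
  simp only [Real.rpow_zero, mul_one, zero_add, add_zero, Real.Gamma_one] at h
  simp [hamNS, h]
  ring

theorem hamNS_first_two_iterates (α ν ℏ a b : ℝ) (hα₀ : 0 < α) (hα₁ : α < 1)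
    (hℏ : ℏ ≠ 0) (hab : a < b)
    (ψ : ℝ → ℝ) (hψC1 : ContDiffOn ℝ 1 ψ (Set.Icc a b))
    (hψmono : StrictMonoOn ψ (Set.Icc a b))
    (hψ' : ∀ x ∈ Set.Icc a b, 0 < deriv ψ x) :
    ∀ r : ℝ, r ≠ 0 → ∀ t ∈ Set.Icc a b,
      hamNS α a ν ℏ ψ 1 r t =
        -(ℏ * ν / r) * (ψ t - ψ a) ^ α / Real.Gamma (α + 1) ∧
      hamNS α a ν ℏ ψ 2 r t =
        -(1 + ℏ) * (ℏ * ν / r) * (ψ t - ψ a) ^ α / Real.Gamma (α + 1)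
          + (ℏ ^ 2 * ν ^ 2 / r ^ 3) * (ψ t - ψ a) ^ (2 * α) / Real.Gamma (2 * α + 1) := by
  intro r hr t ht
  have hψC := hψC1.continuousOn
  have h1 := fun (r : ℝ) {t : ℝ} (ht : t ∈ Set.Icc a b) =>
    hamNS_one (ν := ν) (ℏ := ℏ) hα₀ hψC hψmono hψ' r ht
  refine ⟨by rw [h1 r ht]; ring, ?_⟩
  have hI := psiFracInt_congr (α := α) (ψ := ψ) ht.1
    (f := fun τ => deriv (deriv (fun r' => hamNS α a ν ℏ ψ 1 r' τ)) r
      + (1 / r) * deriv (fun r' => hamNS α a ν ℏ ψ 1 r' τ) r)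
    (g := fun τ => (-(ℏ * ν) / Real.Gamma (α + 1) * (r ^ 3)⁻¹) * (ψ τ - ψ a) ^ α)
    (fun τ hτ => by
      have e : (fun r' => hamNS α a ν ℏ ψ 1 r' τ) =
          fun r' => (-(ℏ * ν) * (ψ τ - ψ a) ^ α / Real.Gamma (α + 1)) * r'⁻¹ :=
        funext fun r' => h1 r' ⟨hτ.1, hτ.2.trans ht.2⟩
      simp only [e, radial_inv]
      ring)
  rw [psiFracInt_rpow hα₀ hα₀.le hψC hψmono hψ' ht] at hI
  have ha : hamNS α a ν ℏ ψ 1 r a = 0 := by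
    rw [h1 r ⟨le_rfl, hab.le⟩, sub_self, Real.zero_rpow hα₀.ne']
    simp
  rw [hamNS]
  beta_reduce
  rw [hI, ha, h1 r ht, ← two_mul α]
  have hG := (Real.Gamma_pos_of_pos (show 0 < α + 1 by linarith)).ne'
  have hG2 := (Real.Gamma_pos_of_pos (show 0 < 2 * α + 1 by linarith)).ne'
  have hchi : chiHAM (1 + 1) = 1 := by norm_num [chiHAM]
  rw [hchi]
  field_simp
  ring
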